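/- arXiv:2407.14105 — 2 statements merged into one kernel-verified Lean document; each statement's English description precedes it below -/
import Mathlib

section
/- Over the alphabet {0,1}, the periodic strings (001)^ω and (01)^ω satisfy (001)^ω ≤_1qi (01)^ω and (01)^ω ≤_1qi (001)^ω (so they are 1qi-equivalent), but there is no pqi-reduction from (001)^ω to (01)^ω. -/
/-- An infinite string over an alphabet `Γ` is a function `ℕ → Γ`, with positions
indexed from 1.  `IsQI C α β f` says that `f : ℕ → ℕ` is a `C`-quasi-isometry from
the string `α` to the string `β`: `C ≥ 1`, `f` maps positions (`≥ 1`) to positions,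
`f` is color-preserving (`β (f x) = α x`), condition (a) holds (`f 1 ≤ C` and
`|f (x+1) − f x| ≤ C`), and condition (b) holds (`x + C < y → f x < f y`). -/
def IsQI {Γ : Type*} (C : ℕ) (α β : ℕ → Γ) (f : ℕ → ℕ) : Prop :=
  1 ≤ C ∧
  (∀ x, 1 ≤ x → 1 ≤ f x) ∧
  (∀ x, 1 ≤ x → β (f x) = α x) ∧
  f 1 ≤ C ∧
  (∀ x, 1 ≤ x → |((f (x + 1) : ℤ)) - (f x : ℤ)| ≤ (C : ℤ)) ∧
  (∀ x y, 1 ≤ x → x + C < y → f x < f y)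

/-- Quasi-isometric reducibility `α ≤_qi β`: some `C`-quasi-isometry from `α` to `β`
exists. -/
def QIred {Γ : Type*} (α β : ℕ → Γ) : Prop := ∃ C f, IsQI C α β f

/-- Many-one quasi-isometric reducibility `α ≤_mqi β`: some computable
`C`-quasi-isometry from `α` to `β` exists. -/
def MQIred {Γ : Type*} (α β : ℕ → Γ) : Prop :=
  ∃ C f, IsQI C α β f ∧ Computable f

/-- One-one quasi-isometric reducibility `α ≤_1qi β`: some computable
`C`-quasi-isometry from `α` to `β` exists which is injective on positions. -/
def OQIred {Γ : Type*} (α β : ℕ → Γ) : Prop :=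
  ∃ C f, IsQI C α β f ∧ Computable f ∧
    (∀ x y, 1 ≤ x → 1 ≤ y → f x = f y → x = y)

/-- Permutation quasi-isometric reducibility `α ≤_pqi β`: some computable
`C`-quasi-isometry from `α` to `β` exists which is a bijection on positions. -/
def PQIred {Γ : Type*} (α β : ℕ → Γ) : Prop :=
  ∃ C f, IsQI C α β f ∧ Computable f ∧
    (∀ x y, 1 ≤ x → 1 ≤ y → f x = f y → x = y) ∧
    (∀ y, 1 ≤ y → ∃ x, 1 ≤ x ∧ f x = y)

/-- `α ≡_mqi β`. -/
def MQIequiv {Γ : Type*} (α β : ℕ → Γ) : Prop := MQIred α β ∧ MQIred β α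

/-- `α ≡_1qi β`. -/
def OQIequiv {Γ : Type*} (α β : ℕ → Γ) : Prop := OQIred α β ∧ OQIred β α

/-- `α ≡_pqi β`. -/
def PQIequiv {Γ : Type*} (α β : ℕ → Γ) : Prop := PQIred α β ∧ PQIred β α

/-- The periodic string `(01)^ω` over `{0,1}`: `0` at odd positions, `1` at even
positions. -/
def str01 : ℕ → Fin 2 := fun n => if n % 2 = 1 then 0 else 1

/-- The periodic string `(001)^ω` over `{0,1}`: `1` at positions divisible by 3,
`0` elsewhere. -/
def str001 : ℕ → Fin 2 := fun n => if n % 3 = 0 then 1 else 0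

/-- The strings `(001)^ω` and `(01)^ω` are 1qi-reducible to each
other (hence 1qi-equivalent), but there is no pqi-reduction from `(001)^ω` to
`(01)^ω`. -/
theorem oqi_equiv_but_not_pqi :
    OQIred str001 str01 ∧ OQIred str01 str001 ∧ ¬ PQIred str001 str01 := by
  refine ⟨⟨2, fun x => x + (x + 1) / 3, ⟨by norm_num, ?_, ?_, by norm_num, ?_, ?_⟩, ?_, ?_⟩,
    ⟨2, fun x => x + x / 2, ⟨by norm_num, ?_, ?_, by norm_num, ?_, ?_⟩, ?_, ?_⟩, ?_⟩
  · intro x hx; dsimp only; omega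
  · intro x hx
    simp only [str01, str001]
    split_ifs <;> first | rfl | (exfalso; omega)
  · intro x hx
    rw [abs_le]; dsimp only; push_cast; omega
  · intro x y hx h; dsimp only; omega
  · exact (Primrec.nat_add.comp Primrec.id (Primrec.nat_div.comp
      (Primrec.nat_add.comp Primrec.id (Primrec.const 1)) (Primrec.const 3))).to_comp
  · intro x y hx hy h; dsimp only at h; omega
  · intro x hx; dsimp only; omega
  · intro x hx
    simp only [str01, str001]
    split_ifs <;> first | rfl | (exfalso; omega)
  · intro x hx
    rw [abs_le]; dsimp only; push_cast; omega
  · intro x y hx h; dsimp only; omega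
  · exact (Primrec.nat_add.comp Primrec.id
      (Primrec.nat_div.comp Primrec.id (Primrec.const 2))).to_comp
  · intro x y hx hy h; dsimp only at h; omega
  · rintro ⟨C, f, ⟨hC, hpos, hcol, -, -, hb⟩, -, hinj, hsurj⟩
    have hodd : ∀ x, 1 ≤ x → x % 3 ≠ 0 → f x % 2 = 1 := by
      intro x hx h3
      have h := hcol x hx
      simp only [str01, str001, if_neg h3] at h
      by_contra hne
      simp [hne] at h
    have heven : ∀ x, 1 ≤ x → f x % 2 = 0 → x % 3 = 0 := by
      intro x hx h2
      by_contra h3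
      have := hodd x hx h3
      omega
    obtain ⟨a, ha⟩ : ∃ a, a = 2 * C + 5 := ⟨_, rfl⟩
    obtain ⟨m, hm⟩ : ∃ m, m = f (3 * a + C + 1) := ⟨_, rfl⟩
    have h1 : (Finset.range (2 * a)).card ≤ (Finset.range ((m + 1) / 2)).card := by
      apply Finset.card_le_card_of_injOn (fun i => (f (i + i / 2 + 1) - 1) / 2)
      · intro i hi
        simp only [Finset.coe_range, Set.mem_Iio] at hi ⊢
        have h2 := hb (i + i / 2 + 1) (3 * a + C + 1) (by omega) (by omega)
        have h3 := hodd (i + i / 2 + 1) (by omega) (by omega)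
        omega
      · intro i hi j hj hij
        dsimp only at hij
        have h3 := hodd (i + i / 2 + 1) (by omega) (by omega)
        have h4 := hodd (j + j / 2 + 1) (by omega) (by omega)
        have := hinj (i + i / 2 + 1) (j + j / 2 + 1) (by omega) (by omega) (by omega)
        omega
    choose! g hg1 hg2 using hsurj
    have h2 : (Finset.range (m / 2)).card ≤ (Finset.range (a + (2 * C + 1) / 3)).card := by
      have key : ∀ j, g (2 * j + 2) % 3 = 0 := fun j =>
        heven _ (hg1 _ (by omega)) (by rw [hg2 _ (by omega)]; omega)
      apply Finset.card_le_card_of_injOn (fun j => g (2 * j + 2) / 3 - 1)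
      · intro j hj
        simp only [Finset.coe_range, Set.mem_Iio] at hj ⊢
        have k1 := key j
        have k2 := hg1 (2 * j + 2) (by omega)
        have k3 := hg2 (2 * j + 2) (by omega)
        have k4 := hb (3 * a + C + 1) (g (2 * j + 2)) (by omega)
        by_contra hcon
        have := k4 (by omega)
        omega
      · intro i hi j hj hij
        dsimp only at hij
        have k1 := key i
        have k2 := hg1 (2 * i + 2) (by omega)
        have k3 := hg2 (2 * i + 2) (by omega)
        have l1 := key j
        have l2 := hg1 (2 * j + 2) (by omega)
        have l3 := hg2 (2 * j + 2) (by omega)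
        have e : g (2 * i + 2) = g (2 * j + 2) := by omega
        rw [e] at k3
        omega
    simp only [Finset.card_range] at h1 h2
    omega
end

section
/- Over the alphabet {0,1}, let α = (0^n 1)_{n=1}^∞ be the concatenation 01 001 0001 ⋯ of the words 0^n 1 for n = 1, 2, 3, …, and let β = (0^n 1 1)_{n=1}^∞ be the concatenation of the words 0^n 1 1 for n = 1, 2, 3, …. Then α ≤_mqi β and β ≤_mqi α (so β ≡_mqi α), but β is not 1qi-reducible to α. -/
open Classical in
/-- The string `α = (0^n 1)_{n=1}^∞ = 01 001 0001 ⋯` over `{0,1}`: since the word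
`0^n 1` ends at position `n(n+3)/2`, position `p` carries `1` iff `2p = n(n+3)` for
some `n ≥ 1`. -/
noncomputable def strZeroesOne : ℕ → Fin 2 := fun p =>
  if ∃ n : ℕ, 1 ≤ n ∧ 2 * p = n * (n + 3) then 1 else 0

open Classical in
/-- The string `β = (0^n 1 1)_{n=1}^∞ = 011 0011 00011 ⋯` over `{0,1}`: since the
word `0^n 1 1` ends at position `n(n+5)/2`, position `p` carries `1` iff
`2p = n(n+5)` or `2(p+1) = n(n+5)` for some `n ≥ 1`. -/
noncomputable def strZeroesOneOne : ℕ → Fin 2 := fun p =>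
  if ∃ n : ℕ, 1 ≤ n ∧ (2 * p = n * (n + 5) ∨ 2 * (p + 1) = n * (n + 5)) then 1 else 0

/-- block state: (block index, remaining letters in the block) -/
def mqStep (d : ℕ) (p : ℕ × ℕ) : ℕ × ℕ :=
  if p.2 = 0 then (p.1 + 1, p.1 + d) else (p.1, p.2 - 1)

def mqSt (d x : ℕ) : ℕ × ℕ := (mqStep d)^[x] (0, 0)

theorem mqSt_succ (d x : ℕ) : mqSt d (x + 1) = mqStep d (mqSt d x) :=
  Function.iterate_succ_apply' _ _ _

theorem mqStep_primrec (d : ℕ) : Primrec (mqStep d) := by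
  unfold mqStep
  refine Primrec.ite (Primrec.eq.comp Primrec.snd (Primrec.const 0)) ?_ ?_
  · exact Primrec.pair (Primrec.succ.comp Primrec.fst)
      (Primrec.nat_add.comp Primrec.fst (Primrec.const d))
  · exact Primrec.pair Primrec.fst (Primrec.pred.comp Primrec.snd)

theorem mqSt_primrec (d : ℕ) : Primrec (mqSt d) :=
  Primrec.nat_iterate Primrec.id (Primrec.const (0, 0))
    ((mqStep_primrec d).comp Primrec.snd).to₂

theorem mqSt_inv1 (x : ℕ) : 2 * (x + (mqSt 1 x).2) = (mqSt 1 x).1 * ((mqSt 1 x).1 + 3) ∧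
    (mqSt 1 x).2 ≤ (mqSt 1 x).1 ∧ (1 ≤ x → 1 ≤ (mqSt 1 x).1) := by
  induction x with
  | zero => simp [mqSt]
  | succ x ih =>
    rw [mqSt_succ]
    obtain ⟨h1, h2, h3⟩ := ih
    generalize mqSt 1 x = p at *
    obtain ⟨n, r⟩ := p
    simp only [mqStep] at *
    split_ifs with h
    · subst h
      refine ⟨?_, by simp, by simp⟩
      simp only
      linarith
    · refine ⟨?_, ?_, ?_⟩ <;> simp only
      · rw [← h1]; omega
      · omega
      · intro _
        omega

theorem mqSt_inv2 (x : ℕ) : 2 * (x + (mqSt 2 x).2) = (mqSt 2 x).1 * ((mqSt 2 x).1 + 5) ∧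
    (mqSt 2 x).2 ≤ (mqSt 2 x).1 + 1 ∧ (1 ≤ x → 1 ≤ (mqSt 2 x).1) := by
  induction x with
  | zero => simp [mqSt]
  | succ x ih =>
    rw [mqSt_succ]
    obtain ⟨h1, h2, h3⟩ := ih
    generalize mqSt 2 x = p at *
    obtain ⟨n, r⟩ := p
    simp only [mqStep] at *
    split_ifs with h
    · subst h
      refine ⟨?_, by simp, by simp⟩
      simp only
      linarith
    · refine ⟨?_, ?_, ?_⟩ <;> simp only
      · rw [← h1]; omega
      · omega
      · intro _
        rcases Nat.eq_zero_or_pos x with rfl | hx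
        · simp at h1
          by_contra h0
          have : n = 0 := by omega
          subst this
          omega
        · exact h3 hx

theorem mq_color1 {x n r : ℕ} (hn : 1 ≤ n) (h : 2 * (x + r) = n * (n + 3)) (hr : r ≤ n) :
    strZeroesOne x = if r = 0 then 1 else 0 := by
  unfold strZeroesOne
  congr 1
  rw [eq_iff_iff]
  constructor
  · rintro ⟨m, hm, e⟩
    by_contra h0
    have : m < n := by
      by_contra hc
      push Not at hc
      have := Nat.mul_le_mul hc (Nat.add_le_add_right hc 3)
      omega
    obtain ⟨k, rfl⟩ := Nat.exists_eq_add_of_lt this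
    nlinarith
  · rintro rfl
    exact ⟨n, hn, h⟩

theorem mq_color2 {x n r : ℕ} (hn : 1 ≤ n) (h : 2 * (x + r) = n * (n + 5)) (hr : r ≤ n + 1) :
    strZeroesOneOne x = if r ≤ 1 then 1 else 0 := by
  unfold strZeroesOneOne
  congr 1
  rw [eq_iff_iff]
  constructor
  · rintro ⟨m, hm, e⟩
    by_contra h0
    have : m < n := by
      by_contra hc
      push Not at hc
      have := Nat.mul_le_mul hc (Nat.add_le_add_right hc 5)
      omega
    obtain ⟨k, rfl⟩ := Nat.exists_eq_add_of_lt this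
    rcases e with e | e <;> nlinarith
  · intro h1
    refine ⟨n, hn, ?_⟩
    rcases (by omega : r = 0 ∨ r = 1) with rfl | rfl
    · exact Or.inl h
    · exact Or.inr h

def mqF (x : ℕ) : ℕ := x + (mqSt 1 x).1 - 1

def mqG (x : ℕ) : ℕ := if (mqSt 2 x).2 = 0 then x - (mqSt 2 x).1 else x + 1 - (mqSt 2 x).1

theorem mqF_comp : Computable mqF :=
  (Primrec.pred.comp (Primrec.nat_add.comp Primrec.id
    (Primrec.fst.comp (mqSt_primrec 1)))).to_comp

theorem mqG_comp : Computable mqG := by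
  apply Primrec.to_comp
  unfold mqG
  refine Primrec.ite (Primrec.eq.comp (Primrec.snd.comp (mqSt_primrec 2)) (Primrec.const 0)) ?_ ?_
  · exact Primrec.nat_sub.comp Primrec.id (Primrec.fst.comp (mqSt_primrec 2))
  · exact Primrec.nat_sub.comp Primrec.succ (Primrec.fst.comp (mqSt_primrec 2))

theorem mqF_step (x : ℕ) (hx : 1 ≤ x) : mqF x < mqF (x + 1) ∧ mqF (x + 1) ≤ mqF x + 2 := by
  obtain ⟨h1, h2, h3⟩ := mqSt_inv1 x
  have := h3 hx
  unfold mqF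
  rw [mqSt_succ]
  unfold mqStep
  split_ifs <;> simp only <;> omega

theorem mqG_bd (x : ℕ) (hx : 1 ≤ x) : (mqSt 2 x).1 ≤ x ∧
    ((mqSt 2 x).2 = 0 → (mqSt 2 x).1 + 1 ≤ x) := by
  obtain ⟨h1, h2, h3⟩ := mqSt_inv2 x
  have := h3 hx
  generalize mqSt 2 x = p at *
  obtain ⟨n, r⟩ := p
  simp only at *
  constructor
  · nlinarith
  · rintro rfl
    nlinarith

theorem mqG_step (x : ℕ) (hx : 1 ≤ x) : mqG x ≤ mqG (x + 1) ∧ mqG (x + 1) ≤ mqG x + 1 ∧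
    mqG x < mqG (x + 2) := by
  obtain ⟨b1, b2⟩ := mqG_bd x hx
  unfold mqG
  rw [show x + 2 = (x + 1) + 1 from rfl, mqSt_succ 2 (x + 1), mqSt_succ 2 x]
  generalize mqSt 2 x = p at *
  obtain ⟨n, r⟩ := p
  simp only [mqStep] at *
  by_cases h0 : r = 0
  · subst h0
    have := b2 rfl
    simp
    omega
  · by_cases h1 : r = 1
    · subst h1
      simp
      omega
    · have e : r - 1 ≠ 0 := by omega
      simp only [h0, e, if_false]
      split_ifs <;> omega

theorem mq_mono (f : ℕ → ℕ) (h : ∀ x, 1 ≤ x → f x ≤ f (x + 1)) (x y : ℕ) (hx : 1 ≤ x)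
    (hxy : x ≤ y) : f x ≤ f y := by
  induction y, hxy using Nat.le_induction with
  | base => exact le_rfl
  | succ y hy ih => exact ih.trans (h y (by omega))

theorem mq_part1 : MQIred strZeroesOne strZeroesOneOne := by
  refine ⟨2, mqF, ⟨by norm_num, ?_, ?_, ?_, ?_, ?_⟩, mqF_comp⟩
  · intro x hx
    have := (mqSt_inv1 x).2.2 hx
    unfold mqF
    omega
  · intro x hx
    obtain ⟨h1, h2, h3⟩ := mqSt_inv1 x
    have hn := h3 hx
    rw [mq_color1 hn h1 h2]
    have e : 2 * (mqF x + ((mqSt 1 x).2 + 1)) = (mqSt 1 x).1 * ((mqSt 1 x).1 + 5) := by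
      have : mqF x + 1 = x + (mqSt 1 x).1 := by unfold mqF; omega
      linarith
    rw [mq_color2 hn e (by omega)]
    simp
  · simp [mqF, mqSt, mqStep]
  · intro x hx
    have := mqF_step x hx
    rw [abs_le]
    constructor <;> push_cast <;> omega
  · intro x y hx hxy
    have h1 := mqF_step x hx
    have h2 := mq_mono mqF (fun x hx => (mqF_step x hx).1.le) (x + 1) y (by omega) (by omega)
    omega

theorem mq_part2 : MQIred strZeroesOneOne strZeroesOne := by
  refine ⟨2, mqG, ⟨by norm_num, ?_, ?_, ?_, ?_, ?_⟩, mqG_comp⟩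
  · intro x hx
    have := mqG_bd x hx
    unfold mqG
    split_ifs with h
    · have := this.2 h
      omega
    · omega
  · intro x hx
    obtain ⟨h1, h2, h3⟩ := mqSt_inv2 x
    obtain ⟨b1, b2⟩ := mqG_bd x hx
    have hn := h3 hx
    rw [mq_color2 hn h1 h2]
    have e : 2 * (mqG x + ((mqSt 2 x).2 - 1)) = (mqSt 2 x).1 * ((mqSt 2 x).1 + 3) := by
      have : mqG x + ((mqSt 2 x).2 - 1) + (mqSt 2 x).1 = x + (mqSt 2 x).2 := by
        unfold mqG
        split_ifs with h
        · omega
        · omega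
      linarith
    rw [mq_color1 hn e (by omega)]
    simp [Nat.sub_eq_zero_iff_le]
  · simp [mqG, mqSt, mqStep]
  · intro x hx
    have := mqG_step x hx
    rw [abs_le]
    constructor <;> push_cast <;> omega
  · intro x y hx hxy
    have h1 := mqG_step x hx
    have h2 := mq_mono mqG (fun x hx => (mqG_step x hx).1) (x + 2) y (by omega) (by omega)
    omega

theorem mq_one {p : ℕ} (h : strZeroesOne p = 1) : ∃ n : ℕ, 1 ≤ n ∧ 2 * p = n * (n + 3) := by
  unfold strZeroesOne at h
  by_contra hc
  rw [if_neg hc] at h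
  exact absurd h (by decide)

theorem mq_gap {p q C : ℕ} (hp : strZeroesOne p = 1) (hq : strZeroesOne q = 1) (hlt : p < q)
    (hC : q ≤ p + C) : p ≤ C * (C + 3) := by
  obtain ⟨n, hn, e⟩ := mq_one hp
  obtain ⟨m, hm, e'⟩ := mq_one hq
  have hnm : n < m := by
    by_contra hc
    push Not at hc
    have := Nat.mul_le_mul hc (Nat.add_le_add_right hc 3)
    omega
  have h1 : n ≤ C := by
    obtain ⟨k, rfl⟩ := Nat.exists_eq_add_of_lt hnm
    nlinarith
  have := Nat.mul_le_mul h1 (Nat.add_le_add_right h1 3)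
  omega

theorem mq_part3 : ¬ OQIred strZeroesOneOne strZeroesOne := by
  rintro ⟨C, f, ⟨hC, hpos, hcol, -, ha, -⟩, -, hinj⟩
  -- position of the first 1 in block 2k+2 - indexed by even blocks
  let P : ℕ → ℕ := fun k => (k + 1) * (2 * k + 7) - 1
  have hP : ∀ k, P k + 1 = (k + 1) * (2 * k + 7) := fun k => by
    have : 0 < (k + 1) * (2 * k + 7) := by positivity
    simp only [P]
    omega
  have hP1 : ∀ k, 1 ≤ P k := fun k => by
    have := hP k
    nlinarith
  have hPinj : Function.Injective P := by
    apply StrictMono.injective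
    apply strictMono_nat_of_lt_succ
    intro k
    have := hP k
    have := hP (k + 1)
    nlinarith
  have hc1 : ∀ k, strZeroesOneOne (P k) = 1 := fun k => by
    rw [mq_color2 (n := 2 * k + 2) (r := 1) (by omega) (by rw [hP]; ring) (by omega)]
    simp
  have hc2 : ∀ k, strZeroesOneOne (P k + 1) = 1 := fun k => by
    rw [mq_color2 (n := 2 * k + 2) (r := 0) (by omega) (by rw [hP]; ring) (by omega)]
    simp
  have hb : ∀ k, f (P k) ≤ C * (C + 3) + C := by
    intro k
    have c1 : strZeroesOne (f (P k)) = 1 := by rw [hcol _ (hP1 k), hc1]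
    have c2 : strZeroesOne (f (P k + 1)) = 1 := by rw [hcol _ (by omega), hc2]
    have hd := ha _ (hP1 k)
    rw [abs_le] at hd
    have hne : f (P k) ≠ f (P k + 1) := fun h => by
      have := hinj _ _ (hP1 k) (by omega) h
      omega
    rcases Nat.lt_or_gt_of_ne hne with h | h
    · have := mq_gap c1 c2 h (C := C) (by omega)
      omega
    · have := mq_gap c2 c1 h (C := C) (by omega)
      omega
  have hI : Function.Injective (fun k => f (P k)) := fun a b h =>
    hPinj (hinj _ _ (hP1 a) (hP1 b) h)
  have hfin : (Set.range (fun k => f (P k))).Finite :=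
    (Set.finite_Iic (C * (C + 3) + C)).subset (by rintro _ ⟨k, rfl⟩; exact hb k)
  exact Set.infinite_range_of_injective hI hfin

/-- With `α = (0^n 1)_{n=1}^∞` and `β = (0^n 1 1)_{n=1}^∞`, we
have `α ≤_mqi β` and `β ≤_mqi α` (so `β ≡_mqi α`), but `β` is not 1qi-reducible
to `α`. -/
theorem mqi_equiv_but_not_oqi :
    MQIred strZeroesOne strZeroesOneOne ∧ MQIred strZeroesOneOne strZeroesOne ∧
      ¬ OQIred strZeroesOneOne strZeroesOne := by
  exact ⟨mq_part1, mq_part2, mq_part3⟩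
end
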